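/- The ℂ-algebra endomorphism φ of ℂ[X,Y,Z,W] determined by X ↦ X, Y ↦ XY + 2ZW + XW², Z ↦ Z + XW, W ↦ (1/2)(YZ + 3ZW² + 3XYW + XW³) maps the ideal (XY − Z² + 1) into the ideal (X²Y − Z² + 1), and the ℂ-algebra endomorphism ψ of ℂ[X,Y,Z,W] determined by X ↦ X, Y ↦ X²W² + 2W·g(Z) + Y²((1/4)Z² − 1), Z ↦ X²W + g(Z), W ↦ −XW + (1/2)ZY, where g(Z) = Z − (Z² − 1)·(Z/2), maps the ideal (X²Y − Z² + 1) into the ideal (XY − Z² + 1). The induced ℂ-algebra homomorphisms Φ : ℂ[X,Y,Z,W]/(XY − Z² + 1) → ℂ[X,Y,Z,W]/(X²Y − Z² + 1) and Ψ : ℂ[X,Y,Z,W]/(X²Y − Z² + 1) → ℂ[X,Y,Z,W]/(XY − Z² + 1) are mutually inverse ℂ-algebra isomorphisms (Russell's isomorphism between the cylinders over xy = z² − 1 and x²y = z² − 1). -/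

import Mathlib

open MvPolynomial

/-- The polynomial ring `ℂ[X,Y,Z,W]` with `X 0 = X`, `X 1 = Y`, `X 2 = Z`, `X 3 = W`. -/
abbrev R4 : Type := MvPolynomial (Fin 4) ℂ

/-- The ℂ-algebra endomorphism φ of `ℂ[X,Y,Z,W]` given by
`X ↦ X`, `Y ↦ XY + 2ZW + XW²`, `Z ↦ Z + XW`, `W ↦ (1/2)(YZ + 3ZW² + 3XYW + XW³)`. -/
noncomputable def russellPhi : R4 →ₐ[ℂ] R4 :=
  MvPolynomial.aeval
    ![X 0,
      X 0 * X 1 + 2 * X 2 * X 3 + X 0 * X 3 ^ 2,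
      X 2 + X 0 * X 3,
      C (1 / 2 : ℂ) * (X 1 * X 2 + 3 * X 2 * X 3 ^ 2 + 3 * X 0 * X 1 * X 3 + X 0 * X 3 ^ 3)]

/-- `g(Z) = Z - (Z² - 1)·(Z/2)`. -/
noncomputable def russellg : R4 := X 2 - (X 2 ^ 2 - 1) * (C (1 / 2 : ℂ) * X 2)

/-- The ℂ-algebra endomorphism ψ of `ℂ[X,Y,Z,W]` given by
`X ↦ X`, `Y ↦ X²W² + 2W·g(Z) + Y²((1/4)Z² − 1)`, `Z ↦ X²W + g(Z)`, `W ↦ −XW + (1/2)ZY`. -/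
noncomputable def russellPsi : R4 →ₐ[ℂ] R4 :=
  MvPolynomial.aeval
    ![X 0,
      X 0 ^ 2 * X 3 ^ 2 + 2 * X 3 * russellg + X 1 ^ 2 * (C (1 / 4 : ℂ) * X 2 ^ 2 - 1),
      X 0 ^ 2 * X 3 + russellg,
      -(X 0 * X 3) + C (1 / 2 : ℂ) * X 2 * X 1]

/-!
Away from `x = 0` both cylinders have coordinates `(x, z, w)`, and Russell's maps on points are
`(x, z, w) ↦ (x, z + xw, (z - g(z + xw)) / x²)` and
`(x, z, w) ↦ (x, x²w + g(z), (z - x²w - g(z)) / x)`, which are visibly inverse to each other. They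
are polynomial because `g` is one step of the Newton–Schulz iteration for the equation `z² = 1`:
modulo `z² - 1` it fixes `z` and its derivative `(3/2)(1 - z²)` vanishes, and `g(z)² - 1` is
divisible by `(z² - 1)²`. Since `x` is a non-zero-divisor on both cylinders, it may be cancelled
from the resulting identities.
-/

section RegularVariable

variable {σ R : Type*} [CommRing R]

theorem X_dvd_of_dvd_mul_of_isUnit_constantCoeff {f q : MvPolynomial σ R}
    (hf : IsUnit (constantCoeff f)) {i : σ} (h : X i ∣ f * q) : X i ∣ q := by
  have hunit : IsUnit (f : MvPowerSeries σ R) := MvPowerSeries.isUnit_iff_constantCoeff.2 hf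
  have hseries : (MvPowerSeries.X i : MvPowerSeries σ R) ∣ q := by
    rw [← hunit.dvd_mul_left, ← coe_mul, ← coe_X]
    exact map_dvd coeToMvPowerSeries.ringHom h
  rw [X_dvd_iff_modMonomial_eq_zero]
  ext m
  by_cases hm : Finsupp.single i 1 ≤ m
  · rw [coeff_modMonomial_of_le _ hm, coeff_zero]
  · rw [coeff_modMonomial_of_not_le _ hm, coeff_zero, ← coeff_coe]
    exact MvPowerSeries.X_dvd_iff.1 hseries m (by simpa [Finsupp.single_le_iff] using hm)

theorem isLeftRegular_mk_X_of_isUnit_constantCoeff {f : MvPolynomial σ R}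
    (hf : IsUnit (constantCoeff f)) (i : σ) :
    IsLeftRegular (Ideal.Quotient.mk (Ideal.span {f}) (X i)) := by
  rw [isLeftRegular_iff_right_eq_zero_of_mul]
  intro b hb
  obtain ⟨p, rfl⟩ := Ideal.Quotient.mk_surjective b
  rw [← map_mul, Ideal.Quotient.eq_zero_iff_dvd] at hb
  obtain ⟨q, hq⟩ := hb
  obtain ⟨r, rfl⟩ := X_dvd_of_dvd_mul_of_isUnit_constantCoeff hf (hq ▸ dvd_mul_right (X i) p)
  rw [Ideal.Quotient.eq_zero_iff_dvd]
  exact ⟨r, isRegular_X.left (hq.trans (mul_left_comm _ _ _))⟩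

end RegularVariable

section NewtonSchulz

variable (k : Type*) {A B : Type*} [CommRing k] [Invertible (2 : k)] [CommRing A] [Algebra k A]
  [CommRing B] [Algebra k B]

/-- One step of the Newton–Schulz iteration for the equation `t ^ 2 = 1`, that is, the Newton step
`t - (t ^ 2 - 1) / (2 * t)` with `1 / t` replaced by `t`. It is the polynomial `g` of Russell's
maps, evaluated at an element of a `k`-algebra. -/
def newtonSchulz (t : A) : A := t - (t ^ 2 - 1) * (algebraMap k A ⅟2 * t)

theorem two_mul_algebraMap_invOf_two : 2 * algebraMap k A ⅟2 = 1 := by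
  rw [← map_ofNat (algebraMap k A) 2, ← map_mul, mul_invOf_self, map_one]

theorem map_newtonSchulz (f : A →ₐ[k] B) (t : A) :
    f (newtonSchulz k t) = newtonSchulz k (f t) := by
  simp [newtonSchulz]

theorem newtonSchulz_sq_sub_one (t : A) :
    newtonSchulz k t ^ 2 - 1 = (t ^ 2 - 1) ^ 2 * (algebraMap k A ⅟2 ^ 2 * t ^ 2 - 1) := by
  rw [newtonSchulz]
  linear_combination (-(t ^ 2 * (t ^ 2 - 1))) * two_mul_algebraMap_invOf_two k (A := A)

theorem newtonSchulz_add_mul {x y z w : A} (h : x ^ 2 * y = z ^ 2 - 1) :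
    newtonSchulz k (z + x * w) =
      z - x ^ 2 * (algebraMap k A ⅟2 *
        (y * z + 3 * z * w ^ 2 + 3 * x * y * w + x * w ^ 3)) := by
  rw [newtonSchulz]
  linear_combination algebraMap k A ⅟2 * (z + 3 * x * w) * h -
    x * w * two_mul_algebraMap_invOf_two k (A := A)

end NewtonSchulz

/-- The ideal `(aY - Z² + 1)` of `k[X,Y,Z,W]`; the coefficient `a` is `X` or `X²` in the
cylinders related by Russell's isomorphism. -/
noncomputable abbrev danielewskiIdeal {k : Type*} [CommRing k] (a : MvPolynomial (Fin 4) k) :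
    Ideal (MvPolynomial (Fin 4) k) :=
  Ideal.span {a * X 1 - X 2 ^ 2 + 1}

/-- The coordinate ring `k[X,Y,Z,W] / (aY - Z² + 1)` of the cylinder over the surface
`ay = z² - 1`. -/
abbrev DanielewskiCylinder {k : Type*} [CommRing k] (a : MvPolynomial (Fin 4) k) : Type _ :=
  MvPolynomial (Fin 4) k ⧸ danielewskiIdeal a

namespace DanielewskiCylinder

section Coordinates

variable {k : Type*} [CommRing k] (a : MvPolynomial (Fin 4) k)

/-- The coordinate functions `x, y, z, w` of a cylinder, indexed by `0, 1, 2, 3`. -/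
noncomputable def coord (i : Fin 4) : DanielewskiCylinder a := Ideal.Quotient.mk _ (X i)

theorem mk_mul_coord_one :
    Ideal.Quotient.mk (danielewskiIdeal a) a * coord a 1 = coord a 2 ^ 2 - 1 := by
  have h : Ideal.Quotient.mk (danielewskiIdeal a) (a * X 1 - X 2 ^ 2 + 1) = 0 :=
    Ideal.Quotient.eq_zero_iff_mem.2 (Ideal.mem_span_singleton_self _)
  simp only [map_add, map_sub, map_mul, map_pow, map_one] at h
  simp only [coord]
  linear_combination h

theorem isLeftRegular_coord_zero : IsLeftRegular (coord a 0) :=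
  isLeftRegular_mk_X_of_isUnit_constantCoeff (by simp) 0

variable {a}

theorem algHom_ext {B : Type*} [Semiring B] [Algebra k B] {f g : DanielewskiCylinder a →ₐ[k] B}
    (h : ∀ i, f (coord a i) = g (coord a i)) : f = g :=
  Ideal.Quotient.algHom_ext _ (MvPolynomial.algHom_ext h)

theorem map_coord_one_eq (θ : DanielewskiCylinder a →ₐ[k] DanielewskiCylinder a)
    (hreg : IsLeftRegular (Ideal.Quotient.mk (danielewskiIdeal a) a))
    (ha : θ (Ideal.Quotient.mk _ a) = Ideal.Quotient.mk _ a) (hz : θ (coord a 2) = coord a 2) :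
    θ (coord a 1) = coord a 1 := by
  refine hreg ?_
  calc Ideal.Quotient.mk _ a * θ (coord a 1) = θ (Ideal.Quotient.mk _ a * coord a 1) := by
        rw [map_mul, ha]
    _ = Ideal.Quotient.mk _ a * coord a 1 := by
        simp only [mk_mul_coord_one, map_sub, map_pow, map_one, hz]

end Coordinates

variable (k : Type*) [CommRing k]

theorem coord_zero_mul_coord_one :
    coord (X 0 : MvPolynomial (Fin 4) k) 0 * coord (X 0) 1 = coord (X 0) 2 ^ 2 - 1 :=
  mk_mul_coord_one (X 0)

theorem coord_zero_sq_mul_coord_one :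
    coord (X 0 ^ 2 : MvPolynomial (Fin 4) k) 0 ^ 2 * coord (X 0 ^ 2) 1 =
      coord (X 0 ^ 2) 2 ^ 2 - 1 :=
  mk_mul_coord_one (X 0 ^ 2)

variable [Invertible (2 : k)]

/-- Russell's endomorphism `φ` of `k[X,Y,Z,W]`, over any ring in which `2` is invertible. -/
noncomputable def phi : MvPolynomial (Fin 4) k →ₐ[k] MvPolynomial (Fin 4) k :=
  aeval
    ![X 0,
      X 0 * X 1 + 2 * X 2 * X 3 + X 0 * X 3 ^ 2,
      X 2 + X 0 * X 3,
      C ⅟2 * (X 1 * X 2 + 3 * X 2 * X 3 ^ 2 + 3 * X 0 * X 1 * X 3 + X 0 * X 3 ^ 3)]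

/-- Russell's endomorphism `ψ` of `k[X,Y,Z,W]`, over any ring in which `2` is invertible. -/
noncomputable def psi : MvPolynomial (Fin 4) k →ₐ[k] MvPolynomial (Fin 4) k :=
  aeval
    ![X 0,
      X 0 ^ 2 * X 3 ^ 2 + 2 * X 3 * newtonSchulz k (X 2) +
        X 1 ^ 2 * (C ⅟2 ^ 2 * X 2 ^ 2 - 1),
      X 0 ^ 2 * X 3 + newtonSchulz k (X 2),
      -(X 0 * X 3) + C ⅟2 * X 2 * X 1]

theorem phi_relation :
    phi k (X 0 * X 1 - X 2 ^ 2 + 1) = X 0 ^ 2 * X 1 - X 2 ^ 2 + 1 := by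
  simp only [phi, map_add, map_sub, map_mul, map_pow, map_one, aeval_X, Matrix.cons_val]
  ring

theorem psi_relation :
    psi k (X 0 ^ 2 * X 1 - X 2 ^ 2 + 1) =
      (X 0 * X 1 - X 2 ^ 2 + 1) *
        ((X 0 * X 1 + X 2 ^ 2 - 1) * (C ⅟2 ^ 2 * X 2 ^ 2 - 1)) := by
  have hg := newtonSchulz_sq_sub_one k (X 2 : MvPolynomial (Fin 4) k)
  rw [algebraMap_eq] at hg
  simp only [psi, map_add, map_sub, map_mul, map_pow, map_one, aeval_X, Matrix.cons_val]
  linear_combination -hg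

theorem danielewskiIdeal_le_comap_phi :
    danielewskiIdeal (X 0) ≤ (danielewskiIdeal (X 0 ^ 2)).comap (phi k) := by
  rw [Ideal.span_singleton_le_iff_mem, Ideal.mem_comap, phi_relation]
  exact Ideal.mem_span_singleton_self _

theorem danielewskiIdeal_le_comap_psi :
    danielewskiIdeal (X 0 ^ 2) ≤ (danielewskiIdeal (X 0)).comap (psi k) := by
  rw [Ideal.span_singleton_le_iff_mem, Ideal.mem_comap, psi_relation]
  exact Ideal.mul_mem_right _ _ (Ideal.mem_span_singleton_self _)

/-- The homomorphism `Φ` of cylinders induced by `phi`. -/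
noncomputable def phiHom :
    DanielewskiCylinder (X 0 : MvPolynomial (Fin 4) k) →ₐ[k]
      DanielewskiCylinder (X 0 ^ 2 : MvPolynomial (Fin 4) k) :=
  Ideal.quotientMapₐ _ (phi k) (danielewskiIdeal_le_comap_phi k)

/-- The homomorphism `Ψ` of cylinders induced by `psi`. -/
noncomputable def psiHom :
    DanielewskiCylinder (X 0 ^ 2 : MvPolynomial (Fin 4) k) →ₐ[k]
      DanielewskiCylinder (X 0 : MvPolynomial (Fin 4) k) :=
  Ideal.quotientMapₐ _ (psi k) (danielewskiIdeal_le_comap_psi k)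

theorem phiHom_mk (p : MvPolynomial (Fin 4) k) :
    phiHom k (Ideal.Quotient.mk _ p) = Ideal.Quotient.mk _ (phi k p) := rfl

theorem psiHom_mk (p : MvPolynomial (Fin 4) k) :
    psiHom k (Ideal.Quotient.mk _ p) = Ideal.Quotient.mk _ (psi k p) := rfl

theorem phiHom_coord_zero : phiHom k (coord _ 0) = coord _ 0 := by
  simp [coord, phiHom_mk, phi]

theorem phiHom_coord_two :
    phiHom k (coord _ 2) = coord _ 2 + coord _ 0 * coord _ 3 := by
  simp [coord, phiHom_mk, phi]

theorem phiHom_coord_three :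
    phiHom k (coord _ 3) =
      algebraMap k _ ⅟2 * (coord _ 1 * coord _ 2 + 3 * coord _ 2 * coord _ 3 ^ 2 +
        3 * coord _ 0 * coord _ 1 * coord _ 3 + coord _ 0 * coord _ 3 ^ 3) := by
  simp [coord, phiHom_mk, phi, map_ofNat (Ideal.Quotient.mk _),
    IsScalarTower.algebraMap_apply k (MvPolynomial (Fin 4) k) (_ ⧸ _)]

theorem coord_zero_sq_mul_phiHom_coord_three :
    coord _ 0 ^ 2 * phiHom k (coord _ 3) =
      coord _ 2 - newtonSchulz k (phiHom k (coord _ 2)) := by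
  rw [phiHom_coord_two, newtonSchulz_add_mul k (coord_zero_sq_mul_coord_one k),
    sub_sub_cancel, phiHom_coord_three]

theorem psiHom_coord_zero : psiHom k (coord _ 0) = coord _ 0 := by
  simp [coord, psiHom_mk, psi]

theorem psiHom_coord_two :
    psiHom k (coord _ 2) = coord _ 0 ^ 2 * coord _ 3 + newtonSchulz k (coord _ 2) := by
  have hg := map_newtonSchulz k
    (Ideal.Quotient.mkₐ k (danielewskiIdeal (X 0 : MvPolynomial (Fin 4) k))) (X 2)
  simp only [Ideal.Quotient.mkₐ_eq_mk] at hg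
  simp [coord, psiHom_mk, psi, hg]

theorem psiHom_coord_three :
    psiHom k (coord _ 3) =
      -(coord _ 0 * coord _ 3) + algebraMap k _ ⅟2 * coord _ 2 * coord _ 1 := by
  simp [coord, psiHom_mk, psi,
    IsScalarTower.algebraMap_apply k (MvPolynomial (Fin 4) k) (_ ⧸ _)]

theorem coord_zero_mul_psiHom_coord_three :
    coord _ 0 * psiHom k (coord _ 3) = coord _ 2 - psiHom k (coord _ 2) := by
  rw [psiHom_coord_three, psiHom_coord_two, newtonSchulz]
  linear_combination algebraMap k _ ⅟2 * coord _ 2 * coord_zero_mul_coord_one k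

theorem psiHom_phiHom_coord_two : psiHom k (phiHom k (coord _ 2)) = coord _ 2 := by
  rw [phiHom_coord_two, map_add, map_mul, psiHom_coord_zero, coord_zero_mul_psiHom_coord_three,
    add_sub_cancel]

theorem phiHom_psiHom_coord_two : phiHom k (psiHom k (coord _ 2)) = coord _ 2 := by
  rw [psiHom_coord_two, map_add, map_mul, map_pow, map_newtonSchulz, phiHom_coord_zero,
    coord_zero_sq_mul_phiHom_coord_three, sub_add_cancel]

theorem psiHom_phiHom_coord_three : psiHom k (phiHom k (coord _ 3)) = coord _ 3 := by
  refine (isLeftRegular_coord_zero _).pow 2 ?_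
  calc coord _ 0 ^ 2 * psiHom k (phiHom k (coord _ 3))
      = psiHom k (coord _ 0 ^ 2 * phiHom k (coord _ 3)) := by
        rw [map_mul, map_pow, psiHom_coord_zero]
    _ = psiHom k (coord _ 2) - newtonSchulz k (psiHom k (phiHom k (coord _ 2))) := by
        rw [coord_zero_sq_mul_phiHom_coord_three, map_sub, map_newtonSchulz]
    _ = coord _ 0 ^ 2 * coord _ 3 := by
        rw [psiHom_phiHom_coord_two, psiHom_coord_two, add_sub_cancel_right]

theorem phiHom_psiHom_coord_three : phiHom k (psiHom k (coord _ 3)) = coord _ 3 := by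
  refine isLeftRegular_coord_zero _ ?_
  calc coord _ 0 * phiHom k (psiHom k (coord _ 3))
      = phiHom k (coord _ 0 * psiHom k (coord _ 3)) := by rw [map_mul, phiHom_coord_zero]
    _ = phiHom k (coord _ 2) - phiHom k (psiHom k (coord _ 2)) := by
        rw [coord_zero_mul_psiHom_coord_three, map_sub]
    _ = coord _ 0 * coord _ 3 := by
        rw [phiHom_psiHom_coord_two, phiHom_coord_two, add_sub_cancel_left]

theorem psiHom_comp_phiHom : (psiHom k).comp (phiHom k) = AlgHom.id k _ := by
  have hx : psiHom k (phiHom k (coord _ 0)) = coord _ 0 := by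
    rw [phiHom_coord_zero, psiHom_coord_zero]
  have hy : psiHom k (phiHom k (coord _ 1)) = coord _ 1 :=
    map_coord_one_eq ((psiHom k).comp (phiHom k)) (isLeftRegular_coord_zero _) hx
      (psiHom_phiHom_coord_two k)
  refine algHom_ext fun i => ?_
  fin_cases i
  exacts [hx, hy, psiHom_phiHom_coord_two k, psiHom_phiHom_coord_three k]

theorem phiHom_comp_psiHom : (phiHom k).comp (psiHom k) = AlgHom.id k _ := by
  have hx : phiHom k (psiHom k (coord _ 0)) = coord _ 0 := by
    rw [psiHom_coord_zero, phiHom_coord_zero]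
  have hx_sq : phiHom k (psiHom k (coord _ 0 ^ 2)) = coord _ 0 ^ 2 := by
    rw [map_pow, map_pow, hx]
  have hy : phiHom k (psiHom k (coord _ 1)) = coord _ 1 :=
    map_coord_one_eq ((phiHom k).comp (psiHom k)) ((isLeftRegular_coord_zero _).pow 2) hx_sq
      (phiHom_psiHom_coord_two k)
  refine algHom_ext fun i => ?_
  fin_cases i
  exacts [hx, hy, phiHom_psiHom_coord_two k, phiHom_psiHom_coord_three k]

theorem phi_complex_eq_russellPhi : phi ℂ = russellPhi := by
  simp [phi, russellPhi]

theorem psi_complex_eq_russellPsi : psi ℂ = russellPsi := by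
  have hquarter : (C (2⁻¹ : ℂ) : R4) ^ 2 = C 4⁻¹ := by rw [← C_pow]; norm_num
  simp [psi, russellPsi, russellg, newtonSchulz, algebraMap_eq, hquarter]

end DanielewskiCylinder

open DanielewskiCylinder in
theorem russell_isomorphism_general (k : Type*) [CommRing k] [Invertible (2 : k)] :
    (∀ p ∈ danielewskiIdeal (X 0), phi k p ∈ danielewskiIdeal (X 0 ^ 2)) ∧
    (∀ p ∈ danielewskiIdeal (X 0 ^ 2), psi k p ∈ danielewskiIdeal (X 0)) ∧
    ∃ e : DanielewskiCylinder (X 0 : MvPolynomial (Fin 4) k) ≃ₐ[k]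
        DanielewskiCylinder (X 0 ^ 2 : MvPolynomial (Fin 4) k),
      (∀ p, e (Ideal.Quotient.mk _ p) = Ideal.Quotient.mk _ (phi k p)) ∧
      (∀ p, e.symm (Ideal.Quotient.mk _ p) = Ideal.Quotient.mk _ (psi k p)) :=
  ⟨danielewskiIdeal_le_comap_phi k, danielewskiIdeal_le_comap_psi k,
    AlgEquiv.ofAlgHom (phiHom k) (psiHom k) (phiHom_comp_psiHom k) (psiHom_comp_phiHom k),
    phiHom_mk k, psiHom_mk k⟩

theorem russell_isomorphism :
    (∀ p ∈ Ideal.span {(X 0 : R4) * X 1 - X 2 ^ 2 + 1},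
      russellPhi p ∈ Ideal.span {(X 0 : R4) ^ 2 * X 1 - X 2 ^ 2 + 1}) ∧
    (∀ p ∈ Ideal.span {(X 0 : R4) ^ 2 * X 1 - X 2 ^ 2 + 1},
      russellPsi p ∈ Ideal.span {(X 0 : R4) * X 1 - X 2 ^ 2 + 1}) ∧
    ∃ (Φ : (R4 ⧸ Ideal.span {(X 0 : R4) * X 1 - X 2 ^ 2 + 1}) →ₐ[ℂ]
           (R4 ⧸ Ideal.span {(X 0 : R4) ^ 2 * X 1 - X 2 ^ 2 + 1}))
      (Ψ : (R4 ⧸ Ideal.span {(X 0 : R4) ^ 2 * X 1 - X 2 ^ 2 + 1}) →ₐ[ℂ]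
           (R4 ⧸ Ideal.span {(X 0 : R4) * X 1 - X 2 ^ 2 + 1})),
      (∀ p : R4,
        Φ (Ideal.Quotient.mk (Ideal.span {(X 0 : R4) * X 1 - X 2 ^ 2 + 1}) p) =
          Ideal.Quotient.mk (Ideal.span {(X 0 : R4) ^ 2 * X 1 - X 2 ^ 2 + 1}) (russellPhi p)) ∧
      (∀ p : R4,
        Ψ (Ideal.Quotient.mk (Ideal.span {(X 0 : R4) ^ 2 * X 1 - X 2 ^ 2 + 1}) p) =
          Ideal.Quotient.mk (Ideal.span {(X 0 : R4) * X 1 - X 2 ^ 2 + 1}) (russellPsi p)) ∧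
      (∀ a, Ψ (Φ a) = a) ∧ (∀ b, Φ (Ψ b) = b) := by
  rw [← DanielewskiCylinder.phi_complex_eq_russellPhi,
    ← DanielewskiCylinder.psi_complex_eq_russellPsi]
  obtain ⟨hφ, hψ, e, he, he_symm⟩ := russell_isomorphism_general ℂ
  exact ⟨hφ, hψ, e, e.symm, he, he_symm, e.symm_apply_apply, e.apply_symm_apply⟩
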